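/- There exists an absolute constant C > 0 such that for every even integer m ≥ 4 and every real M with 3 ≤ M ≤ m, one has ∑_{j} 1/j ≤ C·C(m)/log M, where the sum runs over integers j with M ≤ j ≤ m such that both j and m − j are prime. -/

import Mathlib

open Real

open scoped Classical

/-- The singular series `C(n) = ∏_{p ∤ n} (1 - 1/(p-1)²) · ∏_{p ∣ n} (1 + 1/(p-1))`,
where both products run over primes. -/
noncomputable def singularSeries (n : ℕ) : ℝ :=
  (∏' p : {p : ℕ // p.Prime ∧ ¬ p ∣ n}, (1 - 1 / ((p : ℕ) - 1 : ℝ) ^ 2)) *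
    ∏ p ∈ n.primeFactors, (1 + 1 / ((p : ℝ) - 1))

/-- The number of solutions of `x * (m - x) = 0` in `ZMod d`. -/
noncomputable def rootCount (m d : ℕ) : ℕ :=
  Nat.card {x : ZMod d // x * ((m : ZMod d) - x) = 0}

theorem rootCount_one (m : ℕ) : rootCount m 1 = 1 := by
  unfold rootCount
  have : Unique {x : ZMod 1 // x * ((m : ZMod 1) - x) = 0} :=
    { default := ⟨0, by simp⟩, uniq := fun x => Subtype.ext (Subsingleton.elim _ _) }
  exact Nat.card_unique

theorem rootCount_mul (m : ℕ) {a b : ℕ} (hab : a.Coprime b) :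
    rootCount m (a * b) = rootCount m a * rootCount m b := by
  unfold rootCount
  rw [← Nat.card_prod]
  refine Nat.card_congr (Equiv.trans
    ((ZMod.chineseRemainder hab).toEquiv.subtypeEquiv
      (q := fun z => z.1 * ((m : ZMod a) - z.1) = 0 ∧ z.2 * ((m : ZMod b) - z.2) = 0) ?_)
    (Equiv.subtypeProdEquivProd (p := fun x : ZMod a => x * ((m : ZMod a) - x) = 0)
      (q := fun x : ZMod b => x * ((m : ZMod b) - x) = 0)))
  intro x
  rw [← map_eq_zero_iff _ (ZMod.chineseRemainder hab).injective, map_mul, map_sub, map_natCast,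
    Prod.ext_iff]
  rfl

theorem rootCount_prime (m : ℕ) {p : ℕ} (hp : p.Prime) :
    rootCount m p = if p ∣ m then 1 else 2 := by
  have : Fact p.Prime := ⟨hp⟩
  have h : rootCount m p = ({0, (m : ZMod p)} : Finset (ZMod p)).card := by
    unfold rootCount
    rw [Nat.card_eq_fintype_card, Fintype.card_subtype]
    congr 1
    ext x
    simp [sub_eq_zero, eq_comm (a := (m : ZMod p))]
  rw [h]
  split_ifs with hd
  · rw [(ZMod.natCast_eq_zero_iff m p).2 hd]
    simp
  · rw [Finset.card_pair]
    exact fun h0 => hd ((ZMod.natCast_eq_zero_iff m p).1 h0.symm)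

theorem rootCount_pos (m : ℕ) {d : ℕ} (hd : d ≠ 0) : 0 < rootCount m d := by
  have : NeZero d := ⟨hd⟩
  have : Nonempty {x : ZMod d // x * ((m : ZMod d) - x) = 0} := ⟨⟨0, by simp⟩⟩
  exact Nat.card_pos

theorem rootCount_le (m : ℕ) {d : ℕ} (hd : d ≠ 0) : rootCount m d ≤ d := by
  have : NeZero d := ⟨hd⟩
  exact (Finite.card_subtype_le _).trans (Nat.card_zmod d).le

theorem abs_card_Ico_modEq_sub_le (a J v : ℕ) {d : ℕ} (hd : 0 < d) :
    |(((Finset.Ico a (a + J)).filter (fun x => x ≡ v [MOD d])).card : ℝ) - J / d| ≤ 1 := by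
  have h := Nat.Ico_filter_modEq_card a (a + J) hd v
  have h' : (((Finset.Ico a (a + J)).filter (fun x => x ≡ v [MOD d])).card : ℤ) =
      ⌈(((a + J : ℕ) : ℚ) - v) / (d : ℚ)⌉ - ⌈((a : ℚ) - v) / (d : ℚ)⌉ := by
    rw [← max_eq_left (a := ⌈(((a + J : ℕ) : ℚ) - v) / (d : ℚ)⌉ - ⌈((a : ℚ) - v) / (d : ℚ)⌉) (b := 0),
      ← h]
    rw [sub_nonneg]
    gcongr
    simp
  have hd' : (0 : ℚ) < d := by exact_mod_cast hd
  have e : (((a + J : ℕ) : ℚ) - v) / (d : ℚ) = ((a : ℚ) - v) / (d : ℚ) + J / d := by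
    push_cast; ring
  have h1 := Int.le_ceil ((((a + J : ℕ) : ℚ) - v) / (d : ℚ))
  have h2 := Int.ceil_lt_add_one ((((a + J : ℕ) : ℚ) - v) / (d : ℚ))
  have h3 := Int.le_ceil (((a : ℚ) - v) / (d : ℚ))
  have h4 := Int.ceil_lt_add_one (((a : ℚ) - v) / (d : ℚ))
  have hq : |(((Finset.Ico a (a + J)).filter (fun x => x ≡ v [MOD d])).card : ℚ) - J / d| ≤ 1 := by
    have : (((Finset.Ico a (a + J)).filter (fun x => x ≡ v [MOD d])).card : ℚ) =
      (⌈(((a + J : ℕ) : ℚ) - v) / (d : ℚ)⌉ : ℚ) - ⌈((a : ℚ) - v) / (d : ℚ)⌉ := by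
      exact_mod_cast h'
    rw [this, abs_le]
    constructor <;> linarith
  have hr := (Rat.cast_le (K := ℝ)).2 hq
  push_cast at hr
  exact hr

theorem abs_card_Ico_dvd_sub_le (m a J : ℕ) {d : ℕ} (hd : 0 < d) :
    |(((Finset.Ico a (a + J)).filter
        (fun x : ℕ => d ∣ ((x : ℤ) * ((m : ℤ) - x)).natAbs)).card : ℝ) - rootCount m d / d * J|
      ≤ rootCount m d := by
  have : NeZero d := ⟨hd.ne'⟩
  set T : Finset (ZMod d) := Finset.univ.filter (fun x => x * ((m : ZMod d) - x) = 0) with hT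
  have hTc : rootCount m d = T.card := by
    unfold rootCount
    rw [Nat.card_eq_fintype_card, Fintype.card_subtype]
  have hcount : ((Finset.Ico a (a + J)).filter
      (fun x : ℕ => d ∣ ((x : ℤ) * ((m : ℤ) - x)).natAbs)).card =
      ∑ v ∈ T, ((Finset.Ico a (a + J)).filter (fun x => x ≡ v.val [MOD d])).card := by
    rw [Finset.card_eq_sum_card_fiberwise (f := fun x : ℕ => (x : ZMod d)) (t := T)]
    · refine Finset.sum_congr rfl fun v hv => ?_
      congr 1
      ext x
      simp only [Finset.mem_filter, and_assoc]
      refine and_congr_right fun _ => ?_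
      have hx : (x ≡ v.val [MOD d]) ↔ (x : ZMod d) = v := by
        rw [← ZMod.natCast_eq_natCast_iff, ZMod.natCast_val, ZMod.cast_id', id]
      rw [hx, and_iff_right_iff_imp]
      rintro rfl
      rw [← Int.natCast_dvd, ← ZMod.intCast_zmod_eq_zero_iff_dvd]
      simpa [hT] using hv
    · intro x hx
      have h2 := (Finset.mem_filter.1 hx).2
      rw [← Int.natCast_dvd, ← ZMod.intCast_zmod_eq_zero_iff_dvd] at h2
      simpa [hT] using h2
  rw [hcount, hTc]
  have : ((∑ v ∈ T, ((Finset.Ico a (a + J)).filter (fun x => x ≡ v.val [MOD d])).card : ℕ) : ℝ)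
      - T.card / d * J = ∑ v ∈ T,
      ((((Finset.Ico a (a + J)).filter (fun x => x ≡ v.val [MOD d])).card : ℝ) - J / d) := by
    rw [Finset.sum_sub_distrib, Finset.sum_const]
    push_cast
    simp only [nsmul_eq_mul]
    ring
  rw [this]
  refine (Finset.abs_sum_le_sum_abs _ _).trans ?_
  refine (Finset.sum_le_sum fun v _ => abs_card_Ico_modEq_sub_le a J v.val hd).trans ?_
  simp

open ArithmeticFunction BoundingSieve Finset in
theorem sum_divisors_dvd_dvd_moebius {P l e : ℕ} (hP : P ≠ 0) (he : e ∣ P) (hsq : Squarefree e) :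
    ∑ d ∈ P.divisors, (if l ∣ d then (if d ∣ e then (moebius d : ℝ) else 0) else 0) =
      if l = e then (moebius l : ℝ) else 0 := by
  have he0 : e ≠ 0 := hsq.ne_zero
  by_cases hle : l ∣ e
  · obtain ⟨k, rfl⟩ := hle
    have hl0 : l ≠ 0 := left_ne_zero_of_mul he0
    have hk0 : k ≠ 0 := right_ne_zero_of_mul he0
    have h1 : ∑ d ∈ P.divisors, (if l ∣ d then (if d ∣ l * k then (moebius d : ℝ) else 0) else 0) =
        ∑ c ∈ k.divisors, (moebius (l * c) : ℝ) := by
      rw [← sum_filter, ← sum_filter, filter_filter]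
      symm
      refine sum_bij (fun c _ => l * c) ?_ ?_ ?_ ?_
      · intro c hc
        have hc' := Nat.dvd_of_mem_divisors hc
        have : l * c ∣ l * k := Nat.mul_dvd_mul_left l hc'
        simp [hP, this.trans he, this]
      · intro a _ b _ hab
        exact Nat.eq_of_mul_eq_mul_left (Nat.pos_of_ne_zero hl0) hab
      · intro d hd
        obtain ⟨_, ⟨c, rfl⟩, h3⟩ := by simpa using hd
        exact ⟨c, by simpa [hk0] using Nat.dvd_of_mul_dvd_mul_left (Nat.pos_of_ne_zero hl0) h3, rfl⟩
      · intros; rfl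
    rw [h1]
    have h2 : ∀ c ∈ k.divisors, (moebius (l * c) : ℝ) = moebius l * moebius c := by
      intro c hc
      have hc' := Nat.dvd_of_mem_divisors hc
      have hcop : l.Coprime c := (Nat.coprime_of_squarefree_mul hsq).coprime_dvd_right hc'
      rw [isMultiplicative_moebius.map_mul_of_coprime hcop]
      push_cast; ring
    rw [sum_congr rfl h2, ← mul_sum]
    have h3 : (∑ c ∈ k.divisors, (moebius c : ℝ)) = if k = 1 then 1 else 0 := by
      rw [← ArithmeticFunction.one_apply, ← coe_moebius_mul_coe_zeta (R := ℝ),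
        coe_mul_zeta_apply]
      rfl
    rw [h3]
    by_cases hk : k = 1
    · simp [hk]
    · have : l ≠ l * k := fun h => hk (by
        have := Nat.eq_of_mul_eq_mul_left (Nat.pos_of_ne_zero hl0) ((mul_one l).trans h)
        exact this.symm)
      simp [hk, this]
  · rw [if_neg (fun h => hle h.dvd)]
    refine sum_eq_zero fun d _ => ?_
    split_ifs with h1 h2
    · exact absurd (h1.trans h2) hle
    · rfl
    · rfl

namespace BoundingSieve

open ArithmeticFunction Finset

/-- The truncated sum of `selbergTerms` that appears in the denominator of Selberg's bound. -/
noncomputable def selbergSum (s : BoundingSieve) (R : ℕ) : ℝ :=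
  ∑ l ∈ s.prodPrimes.divisors with l ≤ R, s.selbergTerms l

theorem one_le_selbergSum (s : BoundingSieve) {R : ℕ} (hR : 1 ≤ R) : 1 ≤ s.selbergSum R := by
  unfold selbergSum
  have h1 : s.selbergTerms 1 = 1 := selbergTerms_isMultiplicative.map_one
  rw [← h1]
  refine single_le_sum (f := fun l => s.selbergTerms l) (fun l hl => ?_) ?_
  · exact (selbergTerms_pos (Nat.dvd_of_mem_divisors (mem_filter.1 hl).1)).le
  · simp [prodPrimes_ne_zero, hR]

/-- The optimal weights in Selberg's sieve. -/
noncomputable def selbergWeights (s : BoundingSieve) (R d : ℕ) : ℝ :=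
  if d ∣ s.prodPrimes then
    (s.nu d)⁻¹ * moebius d *
      ((∑ l ∈ s.prodPrimes.divisors with l ≤ R, if d ∣ l then s.selbergTerms l else 0) /
        s.selbergSum R)
  else 0

theorem selbergWeights_one (s : BoundingSieve) {R : ℕ} (hR : 1 ≤ R) :
    s.selbergWeights R 1 = 1 := by
  have := one_le_selbergSum s hR
  have h0 : s.selbergSum R ≠ 0 := by positivity
  unfold selbergWeights
  simp only [one_dvd, if_true]
  rw [s.nu_mult.map_one, ← selbergSum, div_self h0]
  simp

theorem selbergWeights_eq_zero (s : BoundingSieve) {R d : ℕ} (hd : R < d) :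
    s.selbergWeights R d = 0 := by
  unfold selbergWeights
  split_ifs with h
  · rw [sum_eq_zero, zero_div, mul_zero]
    intro l hl
    rw [if_neg]
    intro hdl
    have hl' := mem_filter.1 hl
    have := Nat.le_of_dvd (Nat.pos_of_mem_divisors hl'.1) hdl
    omega
  · rfl

theorem abs_selbergWeights_le (s : BoundingSieve) {R d : ℕ} (hR : 1 ≤ R)
    (hd : d ∣ s.prodPrimes) : |s.selbergWeights R d| ≤ (s.nu d)⁻¹ := by
  have hG := one_le_selbergSum s hR
  have hnu := nu_pos_of_dvd_prodPrimes hd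
  have hg : ∀ l ∈ s.prodPrimes.divisors.filter (· ≤ R), 0 ≤ s.selbergTerms l := fun l hl =>
    (selbergTerms_pos (Nat.dvd_of_mem_divisors (mem_filter.1 hl).1)).le
  unfold selbergWeights
  rw [if_pos hd, abs_mul, abs_mul, abs_of_pos (inv_pos.2 hnu), mul_assoc]
  refine mul_le_of_le_one_right (inv_pos.2 hnu).le ?_
  refine mul_le_one₀ ?_ (abs_nonneg _) ?_
  · exact_mod_cast abs_moebius_le_one
  · rw [abs_div, abs_of_pos (by linarith : 0 < s.selbergSum R)]
    refine div_le_one_of_le₀ ?_ (by linarith)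
    rw [abs_of_nonneg]
    · refine sum_le_sum fun l hl => ?_
      split_ifs
      · rfl
      · exact hg l hl
    · refine sum_nonneg fun l hl => ?_
      split_ifs
      · exact hg l hl
      · rfl

theorem sum_nu_mul_selbergWeights (s : BoundingSieve) {R l : ℕ} (hl : l ∣ s.prodPrimes) :
    (∑ d ∈ s.prodPrimes.divisors, if l ∣ d then s.nu d * s.selbergWeights R d else 0) =
      if l ≤ R then moebius l * s.selbergTerms l / s.selbergSum R else 0 := by
  have hP : s.prodPrimes ≠ 0 := prodPrimes_ne_zero
  calc _ = ∑ d ∈ s.prodPrimes.divisors, ∑ e ∈ s.prodPrimes.divisors with e ≤ R,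
        (s.selbergTerms e / s.selbergSum R) *
          (if l ∣ d then (if d ∣ e then (moebius d : ℝ) else 0) else 0) := by
        refine sum_congr rfl fun d hd => ?_
        have hdP := Nat.dvd_of_mem_divisors hd
        split_ifs with h
        · unfold selbergWeights
          rw [if_pos hdP, ← mul_assoc, ← mul_assoc, mul_inv_cancel₀ (nu_ne_zero hdP), one_mul,
            sum_div, mul_sum]
          refine sum_congr rfl fun e _ => ?_
          split_ifs <;> ring
        · simp
    _ = ∑ e ∈ s.prodPrimes.divisors with e ≤ R, (s.selbergTerms e / s.selbergSum R) *
          (if l = e then (moebius l : ℝ) else 0) := by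
        rw [sum_comm]
        refine sum_congr rfl fun e he => ?_
        have heP := Nat.dvd_of_mem_divisors (mem_filter.1 he).1
        rw [← mul_sum, sum_divisors_dvd_dvd_moebius hP heP (squarefree_of_dvd_prodPrimes heP)]
    _ = _ := by
        simp only [mul_ite, mul_zero, sum_ite_eq, mem_filter, Nat.mem_divisors]
        simp only [hl, hP, ne_eq, not_false_eq_true, and_self, true_and]
        split_ifs
        · ring
        · rfl

theorem mainSum_selbergWeights (s : BoundingSieve) {R : ℕ} (hR : 1 ≤ R) :
    s.mainSum (lambdaSquared (s.selbergWeights R)) = (s.selbergSum R)⁻¹ := by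
  have hG := one_le_selbergSum s hR
  have hG0 : s.selbergSum R ≠ 0 := by positivity
  rw [mainSum_lambdaSquared_eq_sum_mul_sum_sq]
  have h : ∀ l ∈ s.prodPrimes.divisors, (s.selbergTerms l)⁻¹ *
      (∑ d ∈ s.prodPrimes.divisors, if l ∣ d then s.nu d * s.selbergWeights R d else 0) ^ 2 =
      if l ≤ R then s.selbergTerms l * ((s.selbergSum R)⁻¹) ^ 2 else 0 := by
    intro l hl
    have hlP := Nat.dvd_of_mem_divisors hl
    rw [sum_nu_mul_selbergWeights s hlP]
    have hg := (selbergTerms_pos hlP).ne'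
    have hm : ((moebius l : ℤ) : ℝ) ^ 2 = 1 := by
      have := moebius_sq_eq_one_of_squarefree (squarefree_of_dvd_prodPrimes hlP)
      exact_mod_cast this
    split_ifs
    · rw [div_pow, mul_pow, hm]
      field_simp
    · simp
  rw [sum_congr rfl h, ← sum_filter, ← sum_mul, ← selbergSum]
  field_simp

end BoundingSieve

/-- The completely multiplicative function on `ℕ` with the prescribed values on primes. -/
noncomputable def completelyMultiplicative (g : ℕ → ℝ) : ℕ →* ℝ where
  toFun n := if n = 0 then 0 else n.factorization.prod fun p k => g p ^ k
  map_one' := by simp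
  map_mul' a b := by
    by_cases ha : a = 0
    · simp [ha]
    by_cases hb : b = 0
    · simp [hb]
    simp only [mul_eq_zero, ha, hb, or_self, if_false]
    rw [Nat.factorization_mul ha hb]
    exact Finsupp.prod_add_index' (fun _ => pow_zero _) (fun _ _ _ => pow_add _ _ _)

theorem completelyMultiplicative_prime (g : ℕ → ℝ) {p : ℕ} (hp : p.Prime) :
    completelyMultiplicative g p = g p := by
  change (if p = 0 then (0 : ℝ) else p.factorization.prod fun p k => g p ^ k) = g p
  rw [if_neg hp.ne_zero, hp.factorization,
    Finsupp.prod_single_index (h := fun p k => g p ^ k) (pow_zero _), pow_one]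

theorem completelyMultiplicative_nonneg (g : ℕ → ℝ) (hg : ∀ p, p.Prime → 0 ≤ g p) (n : ℕ) :
    0 ≤ completelyMultiplicative g n := by
  change 0 ≤ (if n = 0 then (0 : ℝ) else n.factorization.prod fun p k => g p ^ k)
  split_ifs
  · rfl
  · refine Finset.prod_nonneg fun p hp => pow_nonneg (hg p ?_) _
    exact Nat.prime_of_mem_primeFactors hp

theorem BoundingSieve.sum_le_selbergSum (s : BoundingSieve) {R : ℕ}
    (hR : ∀ l ≤ R, Squarefree l → l ∣ s.prodPrimes) (f : ℕ →* ℝ) (hf0 : ∀ n, 0 ≤ f n)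
    (hf1 : ∀ p, p.Prime → f p < 1) (hf : ∀ p, p.Prime → f p = s.nu p) :
    ∑ n ∈ Finset.Icc 1 R, f n ≤ s.selbergSum R := by
  have hmaps : ∀ n ∈ Finset.Icc 1 R, (∏ p ∈ n.primeFactors, p) ∈
      s.prodPrimes.divisors.filter (· ≤ R) := by
    intro n hn
    have hn' := Finset.mem_Icc.1 hn
    have hle : ∏ p ∈ n.primeFactors, p ≤ R :=
      (Nat.le_of_dvd (by omega) (Nat.prod_primeFactors_dvd n)).trans hn'.2
    have hsq : Squarefree (∏ p ∈ n.primeFactors, p) := by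
      rw [← Nat.radical_eq_prod_primeFactors]
      exact UniqueFactorizationMonoid.squarefree_radical
    simp [hle, BoundingSieve.prodPrimes_ne_zero, hR _ hle hsq]
  rw [← Finset.sum_fiberwise_of_maps_to hmaps]
  refine Finset.sum_le_sum fun l hl => ?_
  have hlP := Nat.dvd_of_mem_divisors (Finset.mem_filter.1 hl).1
  have hlsq := BoundingSieve.squarefree_of_dvd_prodPrimes hlP
  have hl0 : 0 < l := Nat.pos_of_ne_zero hlsq.ne_zero
  have hfl : f l = s.nu l := by
    rw [← BoundingSieve.prod_primeFactors_nu hlP]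
    conv_lhs => rw [← Nat.prod_primeFactors_of_squarefree hlsq]
    rw [map_prod]
    exact Finset.prod_congr rfl fun p hp => hf p (Nat.prime_of_mem_primeFactors hp)
  set F := (Finset.Icc 1 R).filter (fun n => ∏ p ∈ n.primeFactors, p = l) with hF
  have hFdvd : ∀ n ∈ F, l ∣ n ∧ n.primeFactors = l.primeFactors ∧ n ≠ 0 := by
    intro n hn
    obtain ⟨h1, h2⟩ := Finset.mem_filter.1 hn
    refine ⟨h2 ▸ Nat.prod_primeFactors_dvd n, ?_, by have := Finset.mem_Icc.1 h1; omega⟩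
    rw [← h2, Nat.primeFactors_prod fun p hp => Nat.prime_of_mem_primeFactors hp]
  have hsum := (EulerProduct.summable_and_hasSum_factoredNumbers_prod_filter_prime_geometric
    (f := f) (fun {p} hp => by rw [Real.norm_of_nonneg (hf0 p)]; exact hf1 p hp)
    l.primeFactors).2
  have hsum' := (hasSum_subtype_iff_indicator (f := fun n => f n)
    (s := Nat.factoredNumbers l.primeFactors)).1 hsum
  have hinj : Set.InjOn (fun n => n / l) F := by
    intro x hx y hy hxy
    rw [← Nat.mul_div_cancel' (hFdvd x hx).1, ← Nat.mul_div_cancel' (hFdvd y hy).1]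
    exact congrArg (l * ·) hxy
  have hbound : ∑ n ∈ F, f (n / l) ≤ ∏ p ∈ l.primeFactors with p.Prime, (1 - f p)⁻¹ := by
    rw [← Finset.sum_image (f := fun k => f k) hinj]
    refine le_trans (le_of_eq ?_) (sum_le_hasSum (F.image fun n => n / l)
      (fun i _ => Set.indicator_nonneg (fun n _ => hf0 n) i) hsum')
    refine Finset.sum_congr rfl fun k hk => ?_
    rw [Set.indicator_of_mem]
    obtain ⟨n, hn, rfl⟩ := Finset.mem_image.1 hk
    obtain ⟨h1, h2, h3⟩ := hFdvd n hn
    rw [Nat.mem_factoredNumbers']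
    intro p hp hpk
    rw [← h2]
    exact Nat.mem_primeFactors.2 ⟨hp, hpk.trans (Nat.div_dvd_of_dvd h1), h3⟩
  calc ∑ n ∈ F, f n = f l * ∑ n ∈ F, f (n / l) := by
        rw [Finset.mul_sum]
        refine Finset.sum_congr rfl fun n hn => ?_
        rw [← map_mul, Nat.mul_div_cancel' (hFdvd n hn).1]
    _ ≤ f l * ∏ p ∈ l.primeFactors with p.Prime, (1 - f p)⁻¹ :=
        mul_le_mul_of_nonneg_left hbound (hf0 l)
    _ = s.selbergTerms l := by
        rw [BoundingSieve.selbergTerms_apply, hfl,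
          Finset.filter_true_of_mem fun p hp => Nat.prime_of_mem_primeFactors hp]
        congr 1
        refine Finset.prod_congr rfl fun p hp => ?_
        rw [hf p (Nat.prime_of_mem_primeFactors hp)]

theorem card_divisors_filter_le (S : Finset ℕ) (f : ℕ →* ℝ)
    (hf : ∀ p, p.Prime → (if p ∈ S then 1 else 2 : ℝ) ≤ p * f p) (hf0 : ∀ n, 0 ≤ f n)
    {n : ℕ} (hn : n ≠ 0) :
    ((n.divisors.filter (fun b => ∀ p ∈ S, ¬ p ∣ b)).card : ℝ) ≤ n * f n := by
  induction n using induction_on_primes with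
  | zero => exact absurd rfl hn
  | one =>
    simp only [Nat.divisors_one, map_one, Nat.cast_one, mul_one]
    exact_mod_cast (Finset.card_filter_le _ _)
  | prime_mul p k hp ih =>
    have hk : k ≠ 0 := right_ne_zero_of_mul hn
    have ih := ih hk
    set A := k.divisors.filter (fun b => ∀ p ∈ S, ¬ p ∣ b) with hA
    have hsub : (p * k).divisors.filter (fun b => ∀ p ∈ S, ¬ p ∣ b) ⊆
        if p ∈ S then A else A ∪ A.image (p * ·) := by
      intro b hb
      obtain ⟨hb1, hb2⟩ := Finset.mem_filter.1 hb
      have hbd := Nat.dvd_of_mem_divisors hb1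
      by_cases hpb : p ∣ b
      · rw [if_neg fun h => hb2 p h hpb]
        obtain ⟨c, rfl⟩ := hpb
        refine Finset.mem_union_right _ (Finset.mem_image_of_mem _ ?_)
        refine Finset.mem_filter.2 ⟨?_, fun q hq hqc => hb2 q hq (hqc.mul_left p)⟩
        exact Nat.mem_divisors.2 ⟨Nat.dvd_of_mul_dvd_mul_left hp.pos hbd, hk⟩
      · have : b ∈ A := Finset.mem_filter.2 ⟨Nat.mem_divisors.2
          ⟨((hp.coprime_iff_not_dvd.2 hpb).symm).dvd_of_dvd_mul_left hbd, hk⟩, hb2⟩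
        split_ifs
        · exact this
        · exact Finset.mem_union_left _ this
    have hcard : (((p * k).divisors.filter (fun b => ∀ p ∈ S, ¬ p ∣ b)).card : ℝ) ≤
        (if p ∈ S then 1 else 2) * A.card := by
      have h := Finset.card_le_card hsub
      split_ifs at h ⊢ with hS
      · rw [one_mul]; exact_mod_cast h
      · have h2 := h.trans (Finset.card_union_le _ _)
        have h3 := Finset.card_image_le (s := A) (f := (p * ·))
        have : ((p * k).divisors.filter (fun b => ∀ p ∈ S, ¬ p ∣ b)).card ≤ 2 * A.card := by omega
        exact_mod_cast this
    refine hcard.trans ?_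
    rw [map_mul]
    push_cast
    calc _ ≤ (p * f p) * (k * f k) := by
          refine mul_le_mul (hf p hp) ih (by positivity) ?_
          exact mul_nonneg (by positivity) (hf0 p)
      _ = _ := by ring

theorem prod_one_sub_inv_mul_sum_inv_le (S : Finset ℕ) (hS : ∀ p ∈ S, p.Prime) (Q : ℕ) :
    (∏ p ∈ S, (1 - 1 / (p : ℝ))) * ∑ b ∈ Finset.Icc 1 Q, 1 / (b : ℝ) ≤
      ∑ b ∈ Finset.Icc 1 Q with ∀ p ∈ S, ¬ p ∣ b, 1 / (b : ℝ) := by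
  induction S using Finset.induction_on with
  | empty => simp
  | insert q S hq ih =>
    have ih := ih fun p hp => hS p (Finset.mem_insert_of_mem hp)
    have hqp := hS q (Finset.mem_insert_self _ _)
    have hq1 : (1 : ℝ) ≤ q := by exact_mod_cast hqp.one_le
    have hq0 : (0 : ℝ) ≤ 1 - 1 / (q : ℝ) := by
      rw [sub_nonneg]
      exact div_le_one_of_le₀ hq1 (by positivity)
    rw [Finset.prod_insert hq, mul_assoc]
    refine (mul_le_mul_of_nonneg_left ih hq0).trans ?_
    set A := (Finset.Icc 1 Q).filter (fun b => ∀ p ∈ S, ¬ p ∣ b) with hA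
    have hsplit := Finset.sum_filter_add_sum_filter_not A (fun b => q ∣ b)
      (fun b => 1 / (b : ℝ))
    have hB : (Finset.Icc 1 Q).filter (fun b => ∀ p ∈ insert q S, ¬ p ∣ b) =
        A.filter (fun b => ¬ q ∣ b) := by
      ext b
      simp only [hA, Finset.mem_filter, Finset.forall_mem_insert]
      tauto
    have hC : ∑ b ∈ A with q ∣ b, 1 / (b : ℝ) ≤ 1 / (q : ℝ) * ∑ b ∈ A, 1 / (b : ℝ) := by
      have hsub : A.filter (fun b => q ∣ b) ⊆ A.image (q * ·) := by
        intro b hb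
        obtain ⟨hb1, c, rfl⟩ := Finset.mem_filter.1 hb
        obtain ⟨hb2, hb3⟩ := Finset.mem_filter.1 hb1
        have hb4 := Finset.mem_Icc.1 hb2
        refine Finset.mem_image_of_mem _ (Finset.mem_filter.2
          ⟨Finset.mem_Icc.2 ⟨?_, ?_⟩, fun p hp hpc => hb3 p hp (hpc.mul_left q)⟩)
        · exact Nat.pos_of_ne_zero fun h => by simp [h] at hb4
        · exact (Nat.le_mul_of_pos_left c hqp.pos).trans hb4.2
      refine (Finset.sum_le_sum_of_subset_of_nonneg hsub fun _ _ _ => by positivity).trans ?_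
      rw [Finset.sum_image fun x _ y _ h => Nat.eq_of_mul_eq_mul_left hqp.pos h, Finset.mul_sum]
      refine le_of_eq (Finset.sum_congr rfl fun b _ => ?_)
      push_cast
      rw [div_mul_div_comm, one_mul]
    rw [hB]
    linarith

theorem sum_inv_mul_sum_inv_le (S : Finset ℕ) (Q : ℕ) (f : ℕ →* ℝ)
    (hf : ∀ p, p.Prime → (if p ∈ S then 1 else 2 : ℝ) ≤ p * f p) (hf0 : ∀ n, 0 ≤ f n) :
    (∑ a ∈ Finset.Icc 1 Q, 1 / (a : ℝ)) *
        ∑ b ∈ Finset.Icc 1 Q with ∀ p ∈ S, ¬ p ∣ b, 1 / (b : ℝ) ≤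
      ∑ n ∈ Finset.Icc 1 (Q ^ 2), f n := by
  set B := (Finset.Icc 1 Q).filter (fun b => ∀ p ∈ S, ¬ p ∣ b) with hB
  rw [Finset.sum_mul_sum, ← Finset.sum_product' (Finset.Icc 1 Q) B
    (fun a b => 1 / (a : ℝ) * (1 / (b : ℝ)))]
  have hmaps : ∀ x ∈ (Finset.Icc 1 Q) ×ˢ B, x.1 * x.2 ∈ Finset.Icc 1 (Q ^ 2) := by
    intro x hx
    obtain ⟨h1, h2⟩ := Finset.mem_product.1 hx
    have h1 := Finset.mem_Icc.1 h1
    have h2 := Finset.mem_Icc.1 (Finset.mem_filter.1 h2).1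
    refine Finset.mem_Icc.2 ⟨Nat.mul_pos h1.1 h2.1, ?_⟩
    rw [sq]
    exact Nat.mul_le_mul h1.2 h2.2
  rw [← Finset.sum_fiberwise_of_maps_to hmaps]
  refine Finset.sum_le_sum fun n hn => ?_
  have hn0 : n ≠ 0 := by have := Finset.mem_Icc.1 hn; omega
  have hnpos : (0 : ℝ) < n := by positivity
  set T := ((Finset.Icc 1 Q) ×ˢ B).filter (fun x => x.1 * x.2 = n) with hT
  have hsum : ∑ x ∈ T, 1 / (x.1 : ℝ) * (1 / (x.2 : ℝ)) = T.card * (1 / (n : ℝ)) := by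
    rw [← nsmul_eq_mul, ← Finset.sum_const]
    refine Finset.sum_congr rfl fun x hx => ?_
    rw [← (Finset.mem_filter.1 hx).2]
    push_cast
    rw [div_mul_div_comm, one_mul]
  have hcard : T.card ≤ (n.divisors.filter (fun b => ∀ p ∈ S, ¬ p ∣ b)).card := by
    refine Finset.card_le_card_of_injOn Prod.snd ?_ ?_
    · intro x hx
      obtain ⟨h1, h2⟩ := Finset.mem_filter.1 hx
      have h3 := (Finset.mem_filter.1 (Finset.mem_product.1 h1).2).2
      exact Finset.mem_filter.2 ⟨Nat.mem_divisors.2 ⟨h2 ▸ Nat.dvd_mul_left _ _, hn0⟩, h3⟩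
    · intro x hx y hy hxy
      have hx2 := (Finset.mem_filter.1 hx).2
      have hy2 := (Finset.mem_filter.1 hy).2
      refine Prod.ext ?_ hxy
      have hpos : 0 < y.2 := Nat.pos_of_ne_zero fun h => hn0 (by rw [← hy2, h, mul_zero])
      have hxy' : x.2 = y.2 := hxy
      rw [hxy', ← hy2] at hx2
      exact Nat.eq_of_mul_eq_mul_right hpos hx2
  rw [hsum, mul_one_div, div_le_iff₀ hnpos, mul_comm (f n)]
  exact le_trans (by exact_mod_cast hcard) (card_divisors_filter_le S f hf hf0 hn0)

theorem BoundingSieve.prod_mul_harmonic_sq_le_selbergSum (s : BoundingSieve) {Q : ℕ}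
    (S : Finset ℕ) (hS : ∀ p ∈ S, p.Prime)
    (hQ : ∀ l ≤ Q ^ 2, Squarefree l → l ∣ s.prodPrimes)
    (hnu : ∀ p, p.Prime → s.nu p = (if p ∈ S then 1 else 2) / p)
    (h2 : 2 ∈ S) :
    (∏ p ∈ S, (1 - 1 / (p : ℝ))) * (∑ a ∈ Finset.Icc 1 Q, 1 / (a : ℝ)) ^ 2 ≤
      s.selbergSum (Q ^ 2) := by
  set f := completelyMultiplicative s.nu with hfdef
  have hnu0 : ∀ p, p.Prime → 0 ≤ s.nu p := by
    intro p hp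
    rw [hnu p hp]
    split_ifs <;> positivity
  have hf0 : ∀ n, 0 ≤ f n := completelyMultiplicative_nonneg _ hnu0
  have hfp : ∀ p, p.Prime → f p = s.nu p := fun p hp => completelyMultiplicative_prime _ hp
  have hf1 : ∀ p, p.Prime → f p < 1 := by
    intro p hp
    have hp0 : (0 : ℝ) < p := by exact_mod_cast hp.pos
    rw [hfp p hp, hnu p hp, div_lt_one hp0]
    split_ifs with h
    · exact_mod_cast hp.one_lt
    · have h3 : 2 < p := lt_of_le_of_ne hp.two_le fun h' => h (h' ▸ h2)
      exact_mod_cast h3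
  have hf : ∀ p, p.Prime → (if p ∈ S then 1 else 2 : ℝ) ≤ p * f p := by
    intro p hp
    have hp0 : (p : ℝ) ≠ 0 := by exact_mod_cast hp.ne_zero
    rw [hfp p hp, hnu p hp, mul_div_cancel₀ _ hp0]
  refine le_trans ?_ (s.sum_le_selbergSum hQ f hf0 hf1 hfp)
  refine le_trans ?_ (sum_inv_mul_sum_inv_le S Q f hf hf0)
  have h := prod_one_sub_inv_mul_sum_inv_le S hS Q
  have h0 : 0 ≤ ∑ a ∈ Finset.Icc 1 Q, 1 / (a : ℝ) := Finset.sum_nonneg fun _ _ => by positivity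
  calc _ = (∑ a ∈ Finset.Icc 1 Q, 1 / (a : ℝ)) *
      ((∏ p ∈ S, (1 - 1 / (p : ℝ))) * ∑ a ∈ Finset.Icc 1 Q, 1 / (a : ℝ)) := by ring
    _ ≤ _ := mul_le_mul_of_nonneg_left h h0

open ArithmeticFunction BoundingSieve in
theorem BoundingSieve.errSum_selbergWeights_le (s : BoundingSieve) {R : ℕ} (hR : 1 ≤ R)
    (hnu : ∀ d, d ∣ s.prodPrimes → (s.nu d)⁻¹ ≤ d)
    (hrem : ∀ d, d ∣ s.prodPrimes → |s.rem d| ≤ d) :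
    s.errSum (lambdaSquared (s.selbergWeights R)) ≤ (R : ℝ) ^ 8 := by
  have hw : ∀ d, d ∣ s.prodPrimes → |s.selbergWeights R d| ≤ if d ∈ Finset.Icc 1 R then (R : ℝ) else 0 := by
    intro d hd
    have hd0 : 0 < d := Nat.pos_of_ne_zero (ne_zero_of_dvd_ne_zero prodPrimes_ne_zero hd)
    split_ifs with h
    · refine ((s.abs_selbergWeights_le hR hd).trans (hnu d hd)).trans ?_
      exact_mod_cast (Finset.mem_Icc.1 h).2
    · rw [s.selbergWeights_eq_zero, abs_zero]
      by_contra h'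
      exact h (Finset.mem_Icc.2 ⟨hd0, not_lt.1 h'⟩)
  have hsum : ∀ d, d ∣ s.prodPrimes → ∑ e ∈ d.divisors, |s.selbergWeights R e| ≤ (R : ℝ) ^ 2 := by
    intro d hd
    calc _ ≤ ∑ e ∈ d.divisors, (if e ∈ Finset.Icc 1 R then (R : ℝ) else 0) :=
          Finset.sum_le_sum fun e he => hw e ((Nat.dvd_of_mem_divisors he).trans hd)
      _ = ∑ e ∈ d.divisors with e ∈ Finset.Icc 1 R, (R : ℝ) := (Finset.sum_filter _ _).symm
      _ ≤ ∑ e ∈ Finset.Icc 1 R, (R : ℝ) := by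
          refine Finset.sum_le_sum_of_subset_of_nonneg ?_ fun _ _ _ => by positivity
          intro e he
          exact (Finset.mem_filter.1 he).2
      _ = _ := by simp [sq]
  have hlam : ∀ d, d ∣ s.prodPrimes →
      |lambdaSquared (s.selbergWeights R) d| * |s.rem d| ≤
        if d ∈ Finset.Icc 1 (R ^ 2) then (R : ℝ) ^ 6 else 0 := by
    intro d hd
    have hd0 : 0 < d := Nat.pos_of_ne_zero (ne_zero_of_dvd_ne_zero prodPrimes_ne_zero hd)
    split_ifs with h
    · have h1 : |lambdaSquared (s.selbergWeights R) d| ≤ (R : ℝ) ^ 4 := by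
        unfold lambdaSquared
        calc _ ≤ ∑ d1 ∈ d.divisors, ∑ d2 ∈ d.divisors,
              |s.selbergWeights R d1| * |s.selbergWeights R d2| := by
              refine (Finset.abs_sum_le_sum_abs _ _).trans (Finset.sum_le_sum fun d1 _ => ?_)
              refine (Finset.abs_sum_le_sum_abs _ _).trans (Finset.sum_le_sum fun d2 _ => ?_)
              split_ifs
              · rw [abs_mul]
              · rw [abs_zero]; positivity
          _ = (∑ d1 ∈ d.divisors, |s.selbergWeights R d1|) ^ 2 := by
              rw [sq, Finset.sum_mul_sum]
          _ ≤ ((R : ℝ) ^ 2) ^ 2 := by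
              refine pow_le_pow_left₀ (Finset.sum_nonneg fun _ _ => abs_nonneg _) (hsum d hd) 2
          _ = _ := by ring
      have h2 : |s.rem d| ≤ (R : ℝ) ^ 2 :=
        (hrem d hd).trans (by exact_mod_cast (Finset.mem_Icc.1 h).2)
      calc _ ≤ (R : ℝ) ^ 4 * (R : ℝ) ^ 2 := mul_le_mul h1 h2 (abs_nonneg _) (by positivity)
        _ = _ := by ring
    · have hlt : R ^ 2 < d := by
        by_contra h'
        exact h (Finset.mem_Icc.2 ⟨hd0, not_lt.1 h'⟩)
      have : lambdaSquared (s.selbergWeights R) d = 0 := by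
        unfold lambdaSquared
        refine Finset.sum_eq_zero fun d1 h1 => Finset.sum_eq_zero fun d2 h2 => ?_
        split_ifs with hl
        · have hd1 := Nat.pos_of_mem_divisors h1
          have hd2 := Nat.pos_of_mem_divisors h2
          have hle : d ≤ d1 * d2 := hl ▸ Nat.le_of_dvd (Nat.mul_pos hd1 hd2) (Nat.lcm_dvd_mul d1 d2)
          by_cases h1R : R < d1
          · rw [s.selbergWeights_eq_zero h1R, zero_mul]
          · by_cases h2R : R < d2
            · rw [s.selbergWeights_eq_zero h2R, mul_zero]
            · exfalso
              have := Nat.mul_le_mul (not_lt.1 h1R) (not_lt.1 h2R)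
              rw [← sq] at this
              omega
        · rfl
      rw [this, abs_zero, zero_mul]
  unfold errSum
  calc _ ≤ ∑ d ∈ s.prodPrimes.divisors, (if d ∈ Finset.Icc 1 (R ^ 2) then (R : ℝ) ^ 6 else 0) :=
        Finset.sum_le_sum fun d hd => hlam d (Nat.dvd_of_mem_divisors hd)
    _ = ∑ d ∈ s.prodPrimes.divisors with d ∈ Finset.Icc 1 (R ^ 2), (R : ℝ) ^ 6 :=
        (Finset.sum_filter _ _).symm
    _ ≤ ∑ d ∈ Finset.Icc 1 (R ^ 2), (R : ℝ) ^ 6 := by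
        refine Finset.sum_le_sum_of_subset_of_nonneg ?_ fun _ _ _ => by positivity
        intro e he
        exact (Finset.mem_filter.1 he).2
    _ = _ := by
        simp only [Finset.sum_const, Nat.card_Icc, nsmul_eq_mul]
        rw [Nat.add_sub_cancel]
        push_cast
        ring

/-- The density function of the set of `x` with `d ∣ x * (m - x)`. -/
noncomputable def rootDensity (m : ℕ) : ArithmeticFunction ℝ where
  toFun d := rootCount m d / d
  map_zero' := by simp

theorem rootDensity_apply (m d : ℕ) : rootDensity m d = rootCount m d / d := rfl

theorem rootDensity_isMultiplicative (m : ℕ) : (rootDensity m).IsMultiplicative := by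
  refine ⟨by simp [rootDensity_apply, rootCount_one], fun {a b} hab => ?_⟩
  simp only [rootDensity_apply, rootCount_mul m hab]
  push_cast
  rw [div_mul_div_comm]

theorem rootDensity_prime (m : ℕ) {p : ℕ} (hp : p.Prime) :
    rootDensity m p = (if p ∣ m then 1 else 2) / p := by
  rw [rootDensity_apply, rootCount_prime m hp]
  split_ifs <;> simp

/-- The sieve removing from `[a, a + J)` the `x` for which `x * (m - x)` has a prime factor at
most `R`. -/
noncomputable def goldbachSieve (m a J R : ℕ) (hm : Even m) : BoundingSieve where
  support := (Finset.Ico a (a + J)).image fun x : ℕ => ((x : ℤ) * ((m : ℤ) - x)).natAbs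
  prodPrimes := primorial R
  prodPrimes_squarefree := squarefree_primorial R
  weights n := ((Finset.Ico a (a + J)).filter
    fun x : ℕ => ((x : ℤ) * ((m : ℤ) - x)).natAbs = n).card
  weights_nonneg n := by positivity
  totalMass := J
  nu := rootDensity m
  nu_mult := rootDensity_isMultiplicative m
  nu_pos_of_prime p hp _ := by
    have := hp.pos
    rw [rootDensity_prime m hp]
    split_ifs <;> positivity
  nu_lt_one_of_prime p hp _ := by
    have hp0 : (0 : ℝ) < p := by exact_mod_cast hp.pos
    rw [rootDensity_prime m hp, div_lt_one hp0]
    split_ifs with h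
    · exact_mod_cast hp.one_lt
    · have h3 : 2 < p := lt_of_le_of_ne hp.two_le fun h' => h (h' ▸ hm.two_dvd)
      exact_mod_cast h3

theorem goldbachSieve_sum_weights (m a J R : ℕ) (hm : Even m) (p : ℕ → Prop)
    [DecidablePred p] :
    ∑ n ∈ (goldbachSieve m a J R hm).support,
        (if p n then (goldbachSieve m a J R hm).weights n else 0) =
      ((Finset.Ico a (a + J)).filter
        fun x : ℕ => p ((x : ℤ) * ((m : ℤ) - x)).natAbs).card := by
  simp only [goldbachSieve]
  rw [Finset.card_eq_sum_card_fiberwise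
    (f := fun x : ℕ => ((x : ℤ) * ((m : ℤ) - x)).natAbs)
    (t := (Finset.Ico a (a + J)).image fun x : ℕ => ((x : ℤ) * ((m : ℤ) - x)).natAbs)]
  · push_cast
    refine Finset.sum_congr rfl fun n _ => ?_
    rw [Finset.filter_filter]
    split_ifs with h
    · congr 2
      ext x
      simp only [Finset.mem_filter, and_congr_right_iff]
      intro _
      constructor
      · rintro rfl; exact ⟨h, rfl⟩
      · exact fun h => h.2
    · symm
      rw [Nat.cast_eq_zero, Finset.card_eq_zero, Finset.filter_eq_empty_iff]
      rintro x _ ⟨h1, rfl⟩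
      exact h h1
  · intro x hx
    exact Finset.mem_coe.2 (Finset.mem_image_of_mem _ (Finset.mem_filter.1 hx).1)

/-- Selberg's upper bound for the number of `x` in `[a, a + J)` with `x` and `m - x` both prime. -/
theorem card_goldbach_primes_le {m a J Q : ℕ} (hm : Even m) (hm0 : m ≠ 0) (hQ : 1 ≤ Q) :
    (((Finset.Ico a (a + J)).filter fun x => x.Prime ∧ (m - x).Prime).card : ℝ) ≤
      J * ((∏ p ∈ m.primeFactors, (1 - 1 / (p : ℝ))) *
        (∑ b ∈ Finset.Icc 1 Q, 1 / (b : ℝ)) ^ 2)⁻¹ + 3 * (Q : ℝ) ^ 16 := by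
  set R := Q ^ 2 with hR
  have hR1 : 1 ≤ R := Nat.one_le_pow _ _ hQ
  set s := goldbachSieve m a J R hm with hs
  have hmult : ∀ d, s.multSum d = (((Finset.Ico a (a + J)).filter
      fun x : ℕ => d ∣ ((x : ℤ) * ((m : ℤ) - x)).natAbs).card : ℝ) := fun d =>
    goldbachSieve_sum_weights m a J R hm (fun n => d ∣ n)
  have hsift : s.siftedSum = (((Finset.Ico a (a + J)).filter
      fun x : ℕ => (primorial R).Coprime ((x : ℤ) * ((m : ℤ) - x)).natAbs).card : ℝ) :=
    goldbachSieve_sum_weights m a J R hm (fun n => (primorial R).Coprime n)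
  have hP0 : s.prodPrimes ≠ 0 := BoundingSieve.prodPrimes_ne_zero
  have hd0 : ∀ d, d ∣ s.prodPrimes → d ≠ 0 := fun d hd => ne_zero_of_dvd_ne_zero hP0 hd
  have hnu : ∀ d, d ∣ s.prodPrimes → (s.nu d)⁻¹ ≤ d := by
    intro d hd
    change (rootDensity m d)⁻¹ ≤ d
    rw [rootDensity_apply, inv_div]
    refine div_le_self (by positivity) ?_
    exact_mod_cast rootCount_pos m (hd0 d hd)
  have hrem : ∀ d, d ∣ s.prodPrimes → |s.rem d| ≤ d := by
    intro d hd
    unfold BoundingSieve.rem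
    rw [hmult]
    refine (abs_card_Ico_dvd_sub_le m a J (Nat.pos_of_ne_zero (hd0 d hd))).trans ?_
    exact_mod_cast rootCount_le m (hd0 d hd)
  have hsel := s.siftedSum_le_mainSum_errSum_of_upperMoebius
    (BoundingSieve.lambdaSquared (s.selbergWeights R))
    (BoundingSieve.upperMoebius_lambdaSquared _ (s.selbergWeights_one hR1))
  rw [s.mainSum_selbergWeights hR1] at hsel
  have herr := s.errSum_selbergWeights_le hR1 hnu hrem
  have hG := s.prod_mul_harmonic_sq_le_selbergSum (Q := Q) m.primeFactors
    (fun p hp => Nat.prime_of_mem_primeFactors hp)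
    (fun l hl hlsq => hlsq.dvd_primorial.trans (primorial_dvd_primorial hl))
    (fun p hp => by
      change rootDensity m p = _
      rw [rootDensity_prime m hp]
      simp [hp, hm0])
    (Nat.mem_primeFactors.2 ⟨Nat.prime_two, hm.two_dvd, hm0⟩)
  have hH : (0 : ℝ) < ∑ b ∈ Finset.Icc 1 Q, 1 / (b : ℝ) :=
    Finset.sum_pos (fun b hb => by have := (Finset.mem_Icc.1 hb).1; positivity) ⟨1, by simp [hQ]⟩
  have hprod : (0 : ℝ) < ∏ p ∈ m.primeFactors, (1 - 1 / (p : ℝ)) := by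
    refine Finset.prod_pos fun p hp => ?_
    have hp1 : (1 : ℝ) < p := by exact_mod_cast (Nat.prime_of_mem_primeFactors hp).one_lt
    rw [sub_pos]
    exact (div_lt_one (by linarith)).2 hp1
  have hmain : s.totalMass * (s.selbergSum R)⁻¹ ≤ J * ((∏ p ∈ m.primeFactors, (1 - 1 / (p : ℝ))) *
        (∑ b ∈ Finset.Icc 1 Q, 1 / (b : ℝ)) ^ 2)⁻¹ := by
    change (J : ℝ) * _ ≤ _
    gcongr
  have hcover : ((Finset.Ico a (a + J)).filter fun x => x.Prime ∧ (m - x).Prime) ⊆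
      ((Finset.Ico a (a + J)).filter
        fun x : ℕ => (primorial R).Coprime ((x : ℤ) * ((m : ℤ) - x)).natAbs) ∪
      (Finset.Icc 1 R ∪ (Finset.Icc 1 R).image (m - ·)) := by
    intro x hx
    obtain ⟨hxI, hxp, hmx⟩ := Finset.mem_filter.1 hx
    have hxm : x < m := by have := hmx.pos; omega
    by_cases h1 : x ≤ R
    · exact Finset.mem_union_right _ (Finset.mem_union_left _
        (Finset.mem_Icc.2 ⟨hxp.one_le, h1⟩))
    by_cases h2 : m - x ≤ R
    · refine Finset.mem_union_right _ (Finset.mem_union_right _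
        (Finset.mem_image.2 ⟨m - x, Finset.mem_Icc.2 ⟨hmx.one_le, h2⟩, by omega⟩))
    · refine Finset.mem_union_left _ (Finset.mem_filter.2 ⟨hxI, ?_⟩)
      have : ((x : ℤ) * ((m : ℤ) - x)).natAbs = x * (m - x) := by
        rw [← Nat.cast_sub hxm.le, ← Nat.cast_mul, Int.natAbs_natCast]
      rw [this]
      refine Nat.Coprime.mul_right ?_ ?_
      · exact (hxp.coprime_iff_not_dvd.2 fun h => h1 (hxp.dvd_primorial_iff.1 h)).symm
      · exact (hmx.coprime_iff_not_dvd.2 fun h => h2 (hmx.dvd_primorial_iff.1 h)).symm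
  have hcard : (((Finset.Ico a (a + J)).filter fun x => x.Prime ∧ (m - x).Prime).card : ℝ) ≤
      s.siftedSum + (R + R) := by
    rw [hsift]
    have h1 := (Finset.card_le_card hcover).trans (Finset.card_union_le _ _)
    have h2 := Finset.card_union_le (Finset.Icc 1 R) ((Finset.Icc 1 R).image (m - ·))
    have h3 := Finset.card_image_le (s := Finset.Icc 1 R) (f := (m - ·))
    rw [Nat.card_Icc] at h2 h3
    have h4 : ((Finset.Ico a (a + J)).filter fun x => x.Prime ∧ (m - x).Prime).card ≤
      ((Finset.Ico a (a + J)).filter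
        fun x : ℕ => (primorial R).Coprime ((x : ℤ) * ((m : ℤ) - x)).natAbs).card + (R + R) := by
      omega
    exact_mod_cast h4
  have hRQ : (R : ℝ) ^ 8 = (Q : ℝ) ^ 16 := by rw [hR]; push_cast; ring
  have hRle : (R : ℝ) ≤ (R : ℝ) ^ 8 := by
    refine le_self_pow₀ ?_ (by norm_num)
    exact_mod_cast hR1
  rw [← hRQ]
  linarith

theorem sum_goldbach_primes_block_le {m : ℕ} (hm : Even m) (hm0 : m ≠ 0) (k : ℕ) :
    ∑ j ∈ (Finset.Ico (2 ^ k) (2 ^ k + 2 ^ k)).filter (fun x => x.Prime ∧ (m - x).Prime),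
      1 / (j : ℝ) ≤ 4800 * (∏ p ∈ m.primeFactors, (1 + 1 / ((p : ℝ) - 1))) *
        (((k + 1 : ℕ) : ℝ) ^ 2)⁻¹ := by
  set r := k / 20 with hr
  have hk1 : 20 * r ≤ k := Nat.mul_div_le k 20
  have hk2 : k + 1 ≤ 20 * (r + 1) := by omega
  have hcard := card_goldbach_primes_le (a := 2 ^ k) (J := 2 ^ k) (Q := 2 ^ r) hm hm0
    Nat.one_le_two_pow
  set A := (Finset.Ico (2 ^ k) (2 ^ k + 2 ^ k)).filter (fun x => x.Prime ∧ (m - x).Prime) with hA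
  have hprod : (∏ p ∈ m.primeFactors, (1 - 1 / (p : ℝ)))⁻¹ =
      ∏ p ∈ m.primeFactors, (1 + 1 / ((p : ℝ) - 1)) := by
    rw [← Finset.prod_inv_distrib]
    refine Finset.prod_congr rfl fun p hp => ?_
    have hp1 : (1 : ℝ) < p := by exact_mod_cast (Nat.prime_of_mem_primeFactors hp).one_lt
    have : (p : ℝ) - 1 ≠ 0 := by linarith
    have h0 : (p : ℝ) ≠ 0 := by linarith
    field_simp
    ring
  set W := ∏ p ∈ m.primeFactors, (1 + 1 / ((p : ℝ) - 1)) with hW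
  have hW1 : 1 ≤ W := by
    refine Finset.prod_induction _ (fun x : ℝ => 1 ≤ x)
      (fun _ _ => one_le_mul_of_one_le_of_one_le) le_rfl fun p hp => ?_
    have hp1 : (1 : ℝ) < p := by exact_mod_cast (Nat.prime_of_mem_primeFactors hp).one_lt
    have : 0 ≤ 1 / ((p : ℝ) - 1) := div_nonneg zero_le_one (by linarith)
    linarith
  have hH : ((r : ℝ) + 1) / 3 ≤ ∑ b ∈ Finset.Icc (1 : ℕ) (2 ^ r), 1 / (b : ℝ) := by
    have h1 : (1 : ℝ) ≤ ∑ b ∈ Finset.Icc (1 : ℕ) (2 ^ r), 1 / (b : ℝ) := by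
      have := Finset.single_le_sum (f := fun b : ℕ => 1 / (b : ℝ)) (s := Finset.Icc 1 (2 ^ r))
        (fun _ _ => by positivity) (Finset.mem_Icc.2 ⟨le_refl 1, Nat.one_le_two_pow⟩)
      simpa using this
    have h2 : (r : ℝ) * Real.log 2 ≤ ∑ b ∈ Finset.Icc (1 : ℕ) (2 ^ r), 1 / (b : ℝ) := by
      have h := log_add_one_le_harmonic (2 ^ r)
      rw [harmonic_eq_sum_Icc] at h
      push_cast at h
      simp only [one_div]
      refine le_trans ?_ h
      rw [← Real.log_pow]
      exact Real.log_le_log (by positivity) (by linarith)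
    have h3 := Real.log_two_gt_d9
    have h4 : (r : ℝ) * 0.5 ≤ r * Real.log 2 := by gcongr; linarith
    linarith
  have hr0 : (0 : ℝ) < (r : ℝ) + 1 := by positivity
  have hmain : ((∏ p ∈ m.primeFactors, (1 - 1 / (p : ℝ))) *
      (∑ b ∈ Finset.Icc (1 : ℕ) (2 ^ r), 1 / (b : ℝ)) ^ 2)⁻¹ ≤ W * (9 / ((r : ℝ) + 1) ^ 2) := by
    rw [mul_inv, hprod]
    refine mul_le_mul_of_nonneg_left ?_ (by linarith)
    calc _ ≤ ((((r : ℝ) + 1) / 3) ^ 2)⁻¹ := by gcongr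
      _ = _ := by rw [div_pow, inv_div]; norm_num
  have herr : ((2 ^ r : ℕ) : ℝ) ^ 16 ≤ 2 ^ k * (1 / ((r : ℝ) + 1) ^ 2) := by
    rw [mul_one_div, le_div_iff₀ (by positivity)]
    have h1 : (r : ℝ) + 1 ≤ 2 ^ r := by exact_mod_cast Nat.lt_two_pow_self (n := r)
    calc ((2 ^ r : ℕ) : ℝ) ^ 16 * ((r : ℝ) + 1) ^ 2
        ≤ ((2 ^ r : ℕ) : ℝ) ^ 16 * ((2 : ℝ) ^ r) ^ 2 := by gcongr
      _ = 2 ^ (18 * r) := by push_cast; ring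
      _ ≤ 2 ^ k := pow_le_pow_right₀ (by norm_num) (by omega)
  have hsum : ∑ j ∈ A, 1 / (j : ℝ) ≤ A.card * (1 / 2 ^ k) := by
    rw [← nsmul_eq_mul, ← Finset.sum_const]
    refine Finset.sum_le_sum fun j hj => ?_
    have := (Finset.mem_Ico.1 (Finset.mem_filter.1 hj).1).1
    gcongr
    exact_mod_cast this
  have hk0 : (0 : ℝ) < 2 ^ k := by positivity
  have hcard' : (A.card : ℝ) ≤ 2 ^ k * (W * (12 / ((r : ℝ) + 1) ^ 2)) := by
    have h1 : (((2 ^ k : ℕ) : ℝ)) * ((∏ p ∈ m.primeFactors, (1 - 1 / (p : ℝ))) *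
      (∑ b ∈ Finset.Icc (1 : ℕ) (2 ^ r), 1 / (b : ℝ)) ^ 2)⁻¹ ≤
        2 ^ k * (W * (9 / ((r : ℝ) + 1) ^ 2)) := by
      push_cast
      exact mul_le_mul_of_nonneg_left hmain hk0.le
    have h2 : (2 : ℝ) ^ k * (1 / ((r : ℝ) + 1) ^ 2) ≤ 2 ^ k * (W * (1 / ((r : ℝ) + 1) ^ 2)) := by
      gcongr
      exact le_mul_of_one_le_left (by positivity) hW1
    calc (A.card : ℝ) ≤ _ := hcard
      _ ≤ 2 ^ k * (W * (9 / ((r : ℝ) + 1) ^ 2)) + 3 * (2 ^ k * (W * (1 / ((r : ℝ) + 1) ^ 2))) := by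
        linarith
      _ = _ := by ring
  have hfin : 12 / ((r : ℝ) + 1) ^ 2 ≤ 4800 * (((k + 1 : ℕ) : ℝ) ^ 2)⁻¹ := by
    have h1 : ((k + 1 : ℕ) : ℝ) ≤ 20 * ((r : ℝ) + 1) := by exact_mod_cast hk2
    rw [← div_eq_mul_inv, div_le_div_iff₀ (by positivity) (by positivity)]
    calc 12 * ((k + 1 : ℕ) : ℝ) ^ 2 ≤ 12 * (20 * ((r : ℝ) + 1)) ^ 2 := by gcongr
      _ = _ := by ring
  calc _ ≤ (A.card : ℝ) * (1 / 2 ^ k) := hsum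
    _ ≤ 2 ^ k * (W * (12 / ((r : ℝ) + 1) ^ 2)) * (1 / 2 ^ k) := by gcongr
    _ = W * (12 / ((r : ℝ) + 1) ^ 2) := by field_simp
    _ ≤ W * (4800 * (((k + 1 : ℕ) : ℝ) ^ 2)⁻¹) := by gcongr
    _ = _ := by ring

theorem sum_goldbach_primes_le {m : ℕ} (hm : Even m) (hm0 : m ≠ 0) {M : ℝ} (hM : 3 ≤ M) :
    ∑ j ∈ (Finset.Icc 1 m).filter
        (fun j : ℕ => M ≤ (j : ℝ) ∧ Nat.Prime j ∧ Nat.Prime (m - j)), (1 : ℝ) / (j : ℝ) ≤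
      9600 * (∏ p ∈ m.primeFactors, (1 + 1 / ((p : ℝ) - 1))) / Real.log M := by
  have hlog : 0 < Real.log M := Real.log_pos (by linarith)
  set a := ⌈Real.log M⌉₊ with ha
  have ha0 : 0 < a := Nat.ceil_pos.2 hlog
  set W := ∏ p ∈ m.primeFactors, (1 + 1 / ((p : ℝ) - 1)) with hW
  have hW0 : 0 ≤ W := by
    refine Finset.prod_nonneg fun p hp => ?_
    have hp1 : (1 : ℝ) < p := by exact_mod_cast (Nat.prime_of_mem_primeFactors hp).one_lt
    have : 0 ≤ 1 / ((p : ℝ) - 1) := div_nonneg zero_le_one (by linarith)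
    linarith
  have hmaps : ∀ j ∈ (Finset.Icc 1 m).filter
        (fun j : ℕ => M ≤ (j : ℝ) ∧ Nat.Prime j ∧ Nat.Prime (m - j)),
      Nat.log 2 j + 1 ∈ Finset.Ioo (a - 1) (m + 2) := by
    intro j hj
    obtain ⟨h1, h2, -⟩ := Finset.mem_filter.1 hj
    have h1 := Finset.mem_Icc.1 h1
    have h3 : a ≤ Nat.log 2 j + 1 := by
      refine Nat.ceil_le.2 ?_
      have h4 : (j : ℝ) ≤ 2 ^ (Nat.log 2 j + 1) := by
        exact_mod_cast (Nat.lt_pow_succ_log_self (by norm_num) j).le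
      have h5 : Real.log M ≤ ((Nat.log 2 j + 1 : ℕ) : ℝ) * Real.log 2 := by
        rw [← Real.log_pow]
        exact Real.log_le_log (by linarith) (h2.trans h4)
      refine h5.trans (mul_le_of_le_one_right (by positivity) ?_)
      linarith [Real.log_two_lt_d9]
    have h4 := Nat.log_le_self 2 j
    exact Finset.mem_Ioo.2 ⟨by omega, by omega⟩
  rw [← Finset.sum_fiberwise_of_maps_to hmaps]
  calc _ ≤ ∑ i ∈ Finset.Ioo (a - 1) (m + 2), 4800 * W * ((i : ℝ) ^ 2)⁻¹ := by
        refine Finset.sum_le_sum fun i hi => ?_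
        obtain ⟨k, rfl⟩ : ∃ k, i = k + 1 := ⟨i - 1, by have := Finset.mem_Ioo.1 hi; omega⟩
        refine le_trans (Finset.sum_le_sum_of_subset_of_nonneg ?_ fun _ _ _ => by positivity)
          (sum_goldbach_primes_block_le hm hm0 k)
        intro j hj
        obtain ⟨h1, h2⟩ := Finset.mem_filter.1 hj
        obtain ⟨h3, -, h4⟩ := Finset.mem_filter.1 h1
        have hj0 : j ≠ 0 := by have := Finset.mem_Icc.1 h3; omega
        have hk : Nat.log 2 j = k := by omega
        refine Finset.mem_filter.2 ⟨Finset.mem_Ico.2 ⟨?_, ?_⟩, h4⟩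
        · rw [← hk]; exact Nat.pow_log_le_self 2 hj0
        · have := Nat.lt_pow_succ_log_self (b := 2) (by norm_num) j
          rw [hk, pow_succ] at this
          omega
    _ = 4800 * W * ∑ i ∈ Finset.Ioo (a - 1) (m + 2), ((i : ℝ) ^ 2)⁻¹ := by rw [Finset.mul_sum]
    _ ≤ 4800 * W * (2 / (((a - 1 : ℕ) : ℝ) + 1)) := by
        gcongr
        exact sum_Ioo_inv_sq_le _ _
    _ = 9600 * W / a := by
        have : ((a - 1 : ℕ) : ℝ) + 1 = a := by exact_mod_cast Nat.sub_add_cancel ha0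
        rw [this]; ring
    _ ≤ _ := by
        gcongr
        exact Nat.le_ceil _

theorem one_sub_sum_le_prod_one_sub {ι : Type*} (s : Finset ι) {f : ι → ℝ}
    (h0 : ∀ i ∈ s, 0 ≤ f i) (h1 : ∀ i ∈ s, f i ≤ 1) :
    1 - ∑ i ∈ s, f i ≤ ∏ i ∈ s, (1 - f i) := by
  induction s using Finset.cons_induction with
  | empty => simp
  | cons a s ha ih =>
    rw [Finset.sum_cons, Finset.prod_cons]
    have h0' : ∀ i ∈ s, 0 ≤ f i := fun i hi => h0 i (Finset.mem_cons_of_mem hi)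
    have h1' : ∀ i ∈ s, f i ≤ 1 := fun i hi => h1 i (Finset.mem_cons_of_mem hi)
    have hP : ∏ i ∈ s, (1 - f i) ≤ 1 := Finset.prod_le_one
      (fun i hi => sub_nonneg.2 (h1' i hi)) fun i hi => by linarith [h0' i hi]
    have ha0 := h0 a (Finset.mem_cons_self a s)
    nlinarith [ih h0' h1', mul_nonneg ha0 (sub_nonneg.2 hP)]

theorem half_le_prod_one_sub_sq (s : Finset ℕ) (hs : ∀ p ∈ s, p.Prime ∧ p ≠ 2) :
    (1 / 2 : ℝ) ≤ ∏ p ∈ s, (1 - 1 / ((p : ℝ) - 1) ^ 2) := by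
  have hform : ∀ p ∈ s, p / 2 * 2 + 1 = p ∧ 0 < p / 2 := by
    intro p hp
    obtain ⟨h1, h2⟩ := hs p hp
    have h3 := Nat.odd_iff.1 (h1.odd_of_ne_two h2)
    have := h1.two_le
    omega
  have hterm : ∀ p ∈ s, 1 / ((p : ℝ) - 1) ^ 2 = 1 / 4 * (((p / 2 : ℕ) : ℝ) ^ 2)⁻¹ := by
    intro p hp
    have h : ((p / 2 : ℕ) : ℝ) * 2 + 1 = p := by exact_mod_cast (hform p hp).1
    have h0 : ((p / 2 : ℕ) : ℝ) ≠ 0 := by exact_mod_cast (hform p hp).2.ne'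
    rw [← h]
    field_simp
    ring
  have hinj : Set.InjOn (fun p : ℕ => p / 2) s := by
    intro p hp q hq hpq
    have h1 := (hform p hp).1
    have h2 := (hform q hq).1
    have h3 : p / 2 = q / 2 := hpq
    omega
  have hsum : ∑ p ∈ s, 1 / ((p : ℝ) - 1) ^ 2 ≤ 1 / 2 := by
    rw [Finset.sum_congr rfl hterm, ← Finset.mul_sum,
      ← Finset.sum_image (f := fun i : ℕ => ((i : ℝ) ^ 2)⁻¹) hinj]
    have hsub : s.image (fun p : ℕ => p / 2) ⊆ Finset.Ioo 0 (s.sup id + 1) := by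
      intro i hi
      obtain ⟨p, hp, rfl⟩ := Finset.mem_image.1 hi
      have h1 : p ≤ s.sup id := Finset.le_sup (f := id) hp
      have := (hform p hp).2
      exact Finset.mem_Ioo.2 ⟨this, by omega⟩
    have h := (Finset.sum_le_sum_of_subset_of_nonneg hsub
      (f := fun i : ℕ => ((i : ℝ) ^ 2)⁻¹) fun _ _ _ => by positivity).trans
      (sum_Ioo_inv_sq_le 0 _)
    norm_num at h ⊢
    linarith
  have hnn : ∀ p ∈ s, 0 ≤ 1 / ((p : ℝ) - 1) ^ 2 := fun p _ => by positivity
  have h := one_sub_sum_le_prod_one_sub s hnn fun p hp =>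
    (Finset.single_le_sum hnn hp).trans (hsum.trans (by norm_num))
  linarith

theorem half_mul_prod_le_singularSeries {m : ℕ} (hm : Even m) :
    1 / 2 * ∏ p ∈ m.primeFactors, (1 + 1 / ((p : ℝ) - 1)) ≤ singularSeries m := by
  unfold singularSeries
  have hnn : 0 ≤ ∏ p ∈ m.primeFactors, (1 + 1 / ((p : ℝ) - 1)) := by
    refine Finset.prod_nonneg fun p hp => ?_
    have hp1 : (1 : ℝ) < p := by exact_mod_cast (Nat.prime_of_mem_primeFactors hp).one_lt
    have : 0 ≤ 1 / ((p : ℝ) - 1) := div_nonneg zero_le_one (by linarith)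
    linarith
  refine mul_le_mul_of_nonneg_right ?_ hnn
  by_cases hmul : Multipliable
      fun p : {p : ℕ // p.Prime ∧ ¬ p ∣ m} => (1 - 1 / ((p : ℕ) - 1 : ℝ) ^ 2)
  · refine ge_of_tendsto' hmul.hasProd fun s => ?_
    have h := half_le_prod_one_sub_sq (s.map (Function.Embedding.subtype _)) fun p hp => by
      obtain ⟨q, -, rfl⟩ := Finset.mem_map.1 hp
      exact ⟨q.2.1, fun h => q.2.2 (by
        have h' : (q : ℕ) = 2 := h
        rw [h']; exact hm.two_dvd)⟩
    rwa [Finset.prod_map] at h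
  · rw [tprod_eq_one_of_not_multipliable hmul]
    norm_num

/-- There is an absolute `C > 0` such that for every even `m ≥ 4` and every real
`3 ≤ M ≤ m`, `∑_{M ≤ j ≤ m, j and m-j prime} 1/j ≤ C·C(m)/log M`. -/
theorem sum_reciprocal_goldbach_primes_le :
    ∃ C : ℝ, 0 < C ∧ ∀ m : ℕ, Even m → 4 ≤ m →
      ∀ M : ℝ, 3 ≤ M → M ≤ m →
        ∑ j ∈ (Finset.Icc 1 m).filter
            (fun j : ℕ => M ≤ (j : ℝ) ∧ Nat.Prime j ∧ Nat.Prime (m - j)),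
          (1 : ℝ) / (j : ℝ) ≤ C * singularSeries m / Real.log M := by
  refine ⟨19200, by norm_num, fun m hm hm4 M hM _ => ?_⟩
  refine (sum_goldbach_primes_le hm (by omega) hM).trans ?_
  have hlog : 0 < Real.log M := Real.log_pos (by linarith)
  refine div_le_div_of_nonneg_right ?_ hlog.le
  linarith [half_mul_prod_le_singularSeries hm]
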